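/- Let P be a ground choice program with choice-least structure whose atom type A and value type V are finite. Then every inflationary least choice fixpoint of P (the limit ⋃_n I_n of an inflationary least choice fixpoint computation) is a choice model of P, i.e. a stable model of foe(P). -/

import Mathlib

/-!
Let `M = ⋃ n, I_n`. Each step adds at most one chosen atom, taken from `Θ_{I_n}`, and then closes
under the standard and `diffchoice` rules, whose heads are never chosen atoms. Hence all chosen
atoms enter through `Θ` and `M` satisfies the functional dependencies (`satFD_limit`).

*`M` is a model of its reduct.* Bodies are finite and the `I_n` increase, so a body contained in `M`
is contained in some `I_n`. This gives closure under the negation-free rules (`limit_closed_TPD`).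
If a chosen rule with body in `M` survived in the reduct but its head `δ` were missing from `M`, no
chosen atom of `M` would conflict with `δ` (otherwise a `diffchoice` rule would have deleted the
rule), so `δ ∈ Θ_{I_n}` for all large `n`. The sequence would then grow strictly forever, which is
impossible over finitely many atoms (`limit_closed_chosen`).

*`M` is contained in every model of its reduct.* A `diffchoice` atom of `M` can only come from a
conflicting chosen atom of `M`, so `M` never contains both `chosen r w` and `diffchoice r w`
(`diffchoice_not_mem`). Therefore each chosen rule fired along the computation survives in the
reduct, and induction on `n` applies (`limit_subset`).
-/

/-- A ground rule: head, positive body, negative body. -/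
structure GroundRule (A : Type) where
  head : A
  pos : Finset A
  neg : Finset A

/-- An interpretation `I` satisfies a ground rule. -/
def satisfiesRule {A : Type} (I : Set A) (r : GroundRule A) : Prop :=
  ((↑r.pos : Set A) ⊆ I ∧ ∀ a ∈ r.neg, a ∉ I) → r.head ∈ I

/-- `I` is a model of the ground program `P`. -/
def isModel {A : Type} (P : Set (GroundRule A)) (I : Set A) : Prop :=
  ∀ r ∈ P, satisfiesRule I r

/-- The immediate consequence operator `T_P`. -/
def TP {A : Type} (P : Set (GroundRule A)) (I : Set A) : Set A :=
  { a | ∃ r ∈ P, r.head = a ∧ (↑r.pos : Set A) ⊆ I ∧ ∀ b ∈ r.neg, b ∉ I }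

/-- The reduct of `P` with respect to `M`. -/
def reduct {A : Type} (P : Set (GroundRule A)) (M : Set A) : Set (GroundRule A) :=
  { r' | ∃ r ∈ P, (∀ b ∈ r.neg, b ∉ M) ∧ r' = ⟨r.head, r.pos, ∅⟩ }

/-- `M` is the least model of `P`. -/
def isLeastModel {A : Type} (P : Set (GroundRule A)) (M : Set A) : Prop :=
  isModel P M ∧ ∀ M', isModel P M' → M ⊆ M'

/-- `M` is a stable model of `P`: it is the least model of the reduct of `P` w.r.t. `M`. -/
def isStableModel {A : Type} (P : Set (GroundRule A)) (M : Set A) : Prop :=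
  isLeastModel (reduct P M) M

/-- Inflationary iteration `F^n(J)` where `F(I) = I ∪ T(I)`. -/
def iterT {A : Type} (T : Set A → Set A) (J : Set A) : ℕ → Set A
  | 0 => J
  | n + 1 => iterT T J n ∪ T (iterT T J n)

/-- `T^{↑ω}(J) = ⋃ₙ Fⁿ(J)` where `F(I) = I ∪ T(I)`. -/
def Tomega {A : Type} (T : Set A → Set A) (J : Set A) : Set A :=
  ⋃ n, iterT T J n

/-- Atoms of a ground choice program: ordinary atoms, `chosen_r(w)` atoms and
`diffchoice_r(w)` atoms. -/
inductive ChoiceAtom (O V R : Type) (ar : R → ℕ) : Type where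
  | ord : O → ChoiceAtom O V R ar
  | chosen : (r : R) → (Fin (ar r) → V) → ChoiceAtom O V R ar
  | diffchoice : (r : R) → (Fin (ar r) → V) → ChoiceAtom O V R ar

/-- A ground choice program. -/
structure ChoiceProgram (O V R : Type) (ar : R → ℕ) : Type where
  /-- For each index `r`, a finite set of functional dependencies `(X, Y)`,
  pairs of disjoint subsets of `Fin (ar r)`. -/
  FD : (r : R) → Finset (Finset (Fin (ar r)) × Finset (Fin (ar r)))
  FD_disj : ∀ r, ∀ p ∈ FD r, Disjoint p.1 p.2
  /-- The standard rules: ordinary heads, positive bodies of ordinary and chosen atoms. -/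
  PD' : Set (GroundRule (ChoiceAtom O V R ar))
  PD'_head : ∀ ru ∈ PD', ∃ o, ru.head = ChoiceAtom.ord o
  PD'_neg : ∀ ru ∈ PD', ru.neg = ∅
  PD'_pos : ∀ ru ∈ PD', ∀ a ∈ ru.pos, ∀ r w, a ≠ ChoiceAtom.diffchoice r w
  /-- For each index `r`, the instances `(w, b)` of its choice rule: tuple and body. -/
  B : (r : R) → Set ((Fin (ar r) → V) × Finset (ChoiceAtom O V R ar))
  B_pos : ∀ r, ∀ p ∈ B r, ∀ a ∈ p.2, ∀ r' w, a ≠ ChoiceAtom.diffchoice r' w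

variable {O V R : Type} {ar : R → ℕ}

/-- Tuples `w, w'` of index `r` conflict: for some FD `(X, Y)` they agree
on every coordinate of `X` and differ on some coordinate of `Y`. -/
def conflicts (P : ChoiceProgram O V R ar) (r : R) (w w' : Fin (ar r) → V) : Prop :=
  ∃ p ∈ P.FD r, (∀ i ∈ p.1, w i = w' i) ∧ ∃ i ∈ p.2, w i ≠ w' i

/-- The chosen rules of `foe(P)`. -/
def chosenRules (P : ChoiceProgram O V R ar) : Set (GroundRule (ChoiceAtom O V R ar)) :=
  { ru | ∃ r, ∃ p ∈ P.B r,
      ru = ⟨ChoiceAtom.chosen r p.1, p.2, {ChoiceAtom.diffchoice r p.1}⟩ }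

/-- The diffchoice rules of `foe(P)`. -/
def diffRules (P : ChoiceProgram O V R ar) : Set (GroundRule (ChoiceAtom O V R ar)) :=
  { ru | ∃ r w w', conflicts P r w w' ∧
      ru = ⟨ChoiceAtom.diffchoice r w, {ChoiceAtom.chosen r w'}, ∅⟩ }

/-- The first-order equivalent `foe(P)` of a choice program. -/
def foe (P : ChoiceProgram O V R ar) : Set (GroundRule (ChoiceAtom O V R ar)) :=
  P.PD' ∪ chosenRules P ∪ diffRules P

/-- `S` satisfies `FD_P`: no two chosen atoms of `S` have conflicting tuples. -/
def satFD (P : ChoiceProgram O V R ar) (S : Set (ChoiceAtom O V R ar)) : Prop :=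
  ∀ r w w', ChoiceAtom.chosen r w ∈ S → ChoiceAtom.chosen r w' ∈ S →
    ¬ conflicts P r w w'

/-- `T_{P_C}`: immediate consequence operator of the chosen rules. -/
def TPC (P : ChoiceProgram O V R ar) : Set (ChoiceAtom O V R ar) → Set (ChoiceAtom O V R ar) :=
  TP (chosenRules P)

/-- `T_{P_D}`: immediate consequence operator of all other rules of `foe(P)`. -/
def TPD (P : ChoiceProgram O V R ar) : Set (ChoiceAtom O V R ar) → Set (ChoiceAtom O V R ar) :=
  TP (P.PD' ∪ diffRules P)

/-- `Γ_P(I)`: `{∅}` if `T_{P_C}(I) \ I = ∅`, otherwise all nonempty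
`ΔC ⊆ T_{P_C}(I) \ I` such that `I ∪ ΔC` satisfies `FD_P`. -/
def GammaP (P : ChoiceProgram O V R ar) (I : Set (ChoiceAtom O V R ar)) :
    Set (Set (ChoiceAtom O V R ar)) :=
  { DC | (TPC P I \ I = ∅ ∧ DC = ∅) ∨
         ((TPC P I \ I).Nonempty ∧ DC.Nonempty ∧ DC ⊆ TPC P I \ I ∧ satFD P (I ∪ DC)) }

/-- The nondeterministic immediate consequence operator `Ψ_P`. -/
def PsiP (P : ChoiceProgram O V R ar) (I : Set (ChoiceAtom O V R ar)) :
    Set (Set (ChoiceAtom O V R ar)) :=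
  { J | ∃ DC ∈ GammaP P I, J = Tomega (TPD P) (I ∪ DC) ∪ DC }

/-- An inflationary choice fixpoint computation for `P`. -/
def isChoiceComputation (P : ChoiceProgram O V R ar)
    (Iseq : ℕ → Set (ChoiceAtom O V R ar)) : Prop :=
  Iseq 0 = ∅ ∧ ∀ n, Iseq (n + 1) ∈ PsiP P (Iseq n)

/-- `Θ_I`: candidate new chosen atoms `δ ∈ T_{P_C}(I) \ I` with `I ∪ {δ}` satisfying `FD_P`. -/
def ThetaI (P : ChoiceProgram O V R ar) (I : Set (ChoiceAtom O V R ar)) :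
    Set (ChoiceAtom O V R ar) :=
  { d | d ∈ TPC P I \ I ∧ satFD P (I ∪ {d}) }

/-- `Γ_P^lazy(I)`. -/
def GammaLazy (P : ChoiceProgram O V R ar) (I : Set (ChoiceAtom O V R ar)) :
    Set (Set (ChoiceAtom O V R ar)) :=
  { J | (∃ d ∈ ThetaI P I, J = I ∪ {d}) ∨ (ThetaI P I = ∅ ∧ J = I) }

/-- `Ψ_P^lazy(I)`. -/
def PsiLazy (P : ChoiceProgram O V R ar) (I : Set (ChoiceAtom O V R ar)) :
    Set (Set (ChoiceAtom O V R ar)) :=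
  { K | ∃ J ∈ GammaLazy P I, K = Tomega (TPD P) J }

/-- An inflationary lazy choice fixpoint computation for `P`. -/
def isLazyComputation (P : ChoiceProgram O V R ar)
    (Iseq : ℕ → Set (ChoiceAtom O V R ar)) : Prop :=
  Iseq 0 = ∅ ∧ ∀ n, Iseq (n + 1) ∈ PsiLazy P (Iseq n)

/-- Choice-least structure on a choice program: a set of choice-least indices,
each with a designated cost coordinate appearing as the right side singleton
of some FD. -/
structure ChoiceLeast [LinearOrder V] (P : ChoiceProgram O V R ar) : Type where
  Rleast : Set R
  costCoord : (r : R) → r ∈ Rleast → Fin (ar r)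
  cost_fd : ∀ (r : R) (hr : r ∈ Rleast), ∃ p ∈ P.FD r, p.2 = {costCoord r hr}

/-- The strict order on atoms induced by a choice-least structure:
`chosen_r(w) < chosen_{r'}(w')` iff `r, r'` are choice-least indices and
`w(c_r) < w'(c_{r'})`. -/
def ltAtom [LinearOrder V] {P : ChoiceProgram O V R ar} (L : ChoiceLeast P)
    (a b : ChoiceAtom O V R ar) : Prop :=
  ∃ (r : R) (hr : r ∈ L.Rleast) (r' : R) (hr' : r' ∈ L.Rleast) (w : Fin (ar r) → V)
    (w' : Fin (ar r') → V),
    a = ChoiceAtom.chosen r w ∧ b = ChoiceAtom.chosen r' w' ∧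
    w (L.costCoord r hr) < w' (L.costCoord r' hr')

/-- `least(Θ)`: elements of `Θ` with no smaller element in `Θ`. -/
def leastSet [LinearOrder V] {P : ChoiceProgram O V R ar} (L : ChoiceLeast P)
    (T : Set (ChoiceAtom O V R ar)) : Set (ChoiceAtom O V R ar) :=
  { t | t ∈ T ∧ ¬ ∃ u ∈ T, ltAtom L u t }

/-- `Γ_P^least(I)`. -/
def GammaLeast [LinearOrder V] (P : ChoiceProgram O V R ar) (L : ChoiceLeast P)
    (I : Set (ChoiceAtom O V R ar)) : Set (Set (ChoiceAtom O V R ar)) :=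
  { J | (∃ d ∈ leastSet L (ThetaI P I), J = I ∪ {d}) ∨ (ThetaI P I = ∅ ∧ J = I) }

/-- `Ψ_P^least(I)`. -/
def PsiLeast [LinearOrder V] (P : ChoiceProgram O V R ar) (L : ChoiceLeast P)
    (I : Set (ChoiceAtom O V R ar)) : Set (Set (ChoiceAtom O V R ar)) :=
  { K | ∃ J ∈ GammaLeast P L I, K = Tomega (TPD P) J }

/-- An inflationary least choice fixpoint computation. -/
def isLeastComputation [LinearOrder V] (P : ChoiceProgram O V R ar) (L : ChoiceLeast P)
    (Iseq : ℕ → Set (ChoiceAtom O V R ar)) : Prop :=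
  Iseq 0 = ∅ ∧ ∀ n, Iseq (n + 1) ∈ PsiLeast P L (Iseq n)

/-! ### Inflationary closures and reducts -/

theorem iterT_mono {A : Type} (T : Set A → Set A) (J : Set A) : Monotone (iterT T J) :=
  monotone_nat_of_le_succ fun _ => Set.subset_union_left

theorem subset_Tomega {A : Type} (T : Set A → Set A) (J : Set A) : J ⊆ Tomega T J :=
  Set.subset_iUnion (iterT T J) 0

/-- An atom of the closure is either present initially or one application of `T` away from a subset
of the closure. -/
theorem mem_Tomega_cases {A : Type} {T : Set A → Set A} {J : Set A} {a : A}
    (h : a ∈ Tomega T J) : a ∈ J ∨ ∃ I, I ⊆ Tomega T J ∧ a ∈ T I := by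
  obtain ⟨n, hn⟩ := Set.mem_iUnion.1 h
  induction n with
  | zero => exact Or.inl hn
  | succ n ih =>
    rcases hn with hn | hn
    · exact ih hn
    · exact Or.inr ⟨_, Set.subset_iUnion (iterT T J) n, hn⟩

theorem Tomega_subset {A : Type} {T : Set A → Set A} {J S : Set A} (hJ : J ⊆ S)
    (hT : ∀ I, I ⊆ S → T I ⊆ S) : Tomega T J ⊆ S := by
  refine Set.iUnion_subset fun n => ?_
  induction n with
  | zero => exact hJ
  | succ n ih => exact Set.union_subset ih (hT _ ih)

/-- Compactness: a finite set inside the union of an increasing sequence lies in one member. -/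
theorem finset_subset_iUnion {A : Type} {f : ℕ → Set A} (hf : Monotone f) {s : Finset A}
    (hs : (↑s : Set A) ⊆ ⋃ n, f n) : ∃ n, (↑s : Set A) ⊆ f n :=
  hf.directed_le.exists_mem_subset_of_finset_subset_biUnion hs

theorem Tomega_closed {A : Type} (Q : Set (GroundRule A)) (J : Set A) {ru : GroundRule A}
    (hru : ru ∈ Q) (hneg : ru.neg = ∅) (hpos : (↑ru.pos : Set A) ⊆ Tomega (TP Q) J) :
    ru.head ∈ Tomega (TP Q) J := by
  obtain ⟨n, hn⟩ := finset_subset_iUnion (iterT_mono (TP Q) J) hpos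
  exact Set.mem_iUnion.2 ⟨n + 1, Or.inr ⟨ru, hru, rfl, hn, by simp [hneg]⟩⟩

/-- A rule of `Q` surviving in the reduct may be applied in any model of the reduct. -/
theorem head_mem_of_isModel_reduct {A : Type} {Q : Set (GroundRule A)} {M M' : Set A}
    (hM' : isModel (reduct Q M) M') {ru : GroundRule A} (hru : ru ∈ Q)
    (hneg : ∀ b ∈ ru.neg, b ∉ M) (hpos : (↑ru.pos : Set A) ⊆ M') : ru.head ∈ M' :=
  hM' ⟨ru.head, ru.pos, ∅⟩ ⟨ru, hru, hneg, rfl⟩ ⟨hpos, fun _ h => absurd h (Finset.notMem_empty _)⟩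

/-! ### The negation-free part of the first-order equivalent -/

section Program

variable {P : ChoiceProgram O V R ar}

theorem neg_eq_empty {ru : GroundRule (ChoiceAtom O V R ar)}
    (h : ru ∈ P.PD' ∪ diffRules P) : ru.neg = ∅ := by
  rcases h with h | ⟨r, w, w', -, rfl⟩
  · exact P.PD'_neg _ h
  · rfl

theorem chosen_not_mem_TPD (I : Set (ChoiceAtom O V R ar)) (r : R) (w : Fin (ar r) → V) :
    ChoiceAtom.chosen r w ∉ TPD P I := by
  rintro ⟨ru, h | ⟨r', w', w'', -, rfl⟩, hh, -⟩
  · obtain ⟨o, ho⟩ := P.PD'_head _ h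
    simp [ho] at hh
  · simp at hh

theorem diffchoice_mem_TPD {I : Set (ChoiceAtom O V R ar)} {r : R} {w : Fin (ar r) → V}
    (h : ChoiceAtom.diffchoice r w ∈ TPD P I) :
    ∃ w', conflicts P r w w' ∧ ChoiceAtom.chosen r w' ∈ I := by
  obtain ⟨ru, h | ⟨r', w', w'', hc, rfl⟩, hh, hp, -⟩ := h
  · obtain ⟨o, ho⟩ := P.PD'_head _ h
    simp [ho] at hh
  · simp only [ChoiceAtom.diffchoice.injEq] at hh
    obtain ⟨rfl, hw⟩ := hh
    obtain rfl := eq_of_heq hw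
    exact ⟨w'', hc, by simpa using hp⟩

theorem chosen_mem_Tomega {J : Set (ChoiceAtom O V R ar)} {r : R} {w : Fin (ar r) → V}
    (h : ChoiceAtom.chosen r w ∈ Tomega (TPD P) J) : ChoiceAtom.chosen r w ∈ J := by
  rcases mem_Tomega_cases h with h | ⟨I, -, h⟩
  · exact h
  · exact absurd h (chosen_not_mem_TPD I r w)

theorem conflicts_symm {r : R} {w w' : Fin (ar r) → V} (h : conflicts P r w w') :
    conflicts P r w' w := by
  obtain ⟨p, hp, h1, i, hi, h2⟩ := h
  exact ⟨p, hp, fun j hj => (h1 j hj).symm, i, hi, h2.symm⟩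

theorem conflicts_irrefl {r : R} {w : Fin (ar r) → V} : ¬ conflicts P r w w := by
  rintro ⟨p, hp, h1, i, hi, h2⟩
  exact h2 rfl

/-- A chosen atom conflicting with no chosen atom already present can be added without violating the
functional dependencies. -/
theorem satFD_insert {I : Set (ChoiceAtom O V R ar)} (hI : satFD P I) {r : R}
    {w : Fin (ar r) → V} (h : ∀ w', ChoiceAtom.chosen r w' ∈ I → ¬ conflicts P r w w') :
    satFD P (I ∪ {ChoiceAtom.chosen r w}) := by
  rintro s u u' (hu | hu) (hu' | hu') hc
  · exact hI _ _ _ hu hu' hc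
  · simp only [Set.mem_singleton_iff, ChoiceAtom.chosen.injEq] at hu'
    obtain ⟨rfl, hw⟩ := hu'
    obtain rfl := eq_of_heq hw
    exact h _ hu (conflicts_symm hc)
  · simp only [Set.mem_singleton_iff, ChoiceAtom.chosen.injEq] at hu
    obtain ⟨rfl, hw⟩ := hu
    obtain rfl := eq_of_heq hw
    exact h _ hu' hc
  · have := hu.trans hu'.symm
    simp only [ChoiceAtom.chosen.injEq, heq_eq_eq, true_and] at this
    exact conflicts_irrefl (this ▸ hc)

/-! ### Properties of a computation -/

variable [LinearOrder V] {L : ChoiceLeast P} {Iseq : ℕ → Set (ChoiceAtom O V R ar)}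

theorem step_mono (hcomp : isLeastComputation P L Iseq) : Monotone Iseq := by
  refine monotone_nat_of_le_succ fun n => ?_
  obtain ⟨J, ⟨d, -, rfl⟩ | ⟨-, rfl⟩, hK⟩ := hcomp.2 n
  · rw [hK]
    exact Set.subset_union_left.trans (subset_Tomega _ _)
  · rw [hK]
    exact subset_Tomega _ _

theorem step_strict (hcomp : isLeastComputation P L Iseq) {n : ℕ}
    (hT : (ThetaI P (Iseq n)).Nonempty) : Iseq n ≠ Iseq (n + 1) := by
  intro heq
  obtain ⟨J, ⟨d, hd, rfl⟩ | ⟨h, -⟩, hK⟩ := hcomp.2 n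
  · apply hd.1.1.2
    rw [heq, hK]
    exact subset_Tomega _ _ (Or.inr rfl)
  · exact hT.ne_empty h

theorem satFD_step (hcomp : isLeastComputation P L Iseq) (n : ℕ) : satFD P (Iseq n) := by
  induction n with
  | zero =>
    rw [hcomp.1]
    exact fun _ _ _ h => absurd h (Set.notMem_empty _)
  | succ n ih =>
    obtain ⟨J, hJ, hK⟩ := hcomp.2 n
    have hs : satFD P J := by
      rcases hJ with ⟨d, hd, rfl⟩ | ⟨-, rfl⟩
      · exact hd.1.2
      · exact ih
    rw [hK]
    exact fun r w w' h h' => hs r w w' (chosen_mem_Tomega h) (chosen_mem_Tomega h')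

theorem satFD_limit (hcomp : isLeastComputation P L Iseq) : satFD P (⋃ n, Iseq n) := by
  intro r w w' h h'
  obtain ⟨n, hn⟩ := Set.mem_iUnion.1 h
  obtain ⟨m, hm⟩ := Set.mem_iUnion.1 h'
  exact satFD_step hcomp (max n m) r w w' (step_mono hcomp (le_max_left n m) hn)
    (step_mono hcomp (le_max_right n m) hm)

/-- Every `diffchoice` atom in the computation is justified by a conflicting chosen atom. -/
theorem diffchoice_step (hcomp : isLeastComputation P L Iseq) (n : ℕ) {r : R}
    {w : Fin (ar r) → V} (h : ChoiceAtom.diffchoice r w ∈ Iseq n) :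
    ∃ w', conflicts P r w w' ∧ ChoiceAtom.chosen r w' ∈ Iseq n := by
  induction n with
  | zero =>
    rw [hcomp.1] at h
    exact absurd h (Set.notMem_empty _)
  | succ n ih =>
    have hmono := step_mono hcomp (Nat.le_succ n)
    have hold : ChoiceAtom.diffchoice r w ∈ Iseq n →
        ∃ w', conflicts P r w w' ∧ ChoiceAtom.chosen r w' ∈ Iseq (n + 1) := fun h =>
      let ⟨w', hc, hw'⟩ := ih h
      ⟨w', hc, hmono hw'⟩
    obtain ⟨J, hJ, hK⟩ := hcomp.2 n
    rw [hK] at h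
    rcases mem_Tomega_cases h with h | ⟨I, hI, h⟩
    · rcases hJ with ⟨d, hd, rfl⟩ | ⟨-, rfl⟩
      · rcases h with h | h
        · exact hold h
          -- The atom added by the choice step is the head of a chosen rule.
        · obtain ⟨ru, ⟨r', p, -, rfl⟩, hh, -⟩ := hd.1.1.1
          rw [Set.mem_singleton_iff, ← hh] at h
          simp at h
      · exact hold h
    · obtain ⟨w', hc, hw'⟩ := diffchoice_mem_TPD h
      exact ⟨w', hc, hK ▸ hI hw'⟩

/-- The limit never blocks one of its own chosen atoms. -/
theorem diffchoice_not_mem (hcomp : isLeastComputation P L Iseq) {r : R} {w : Fin (ar r) → V}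
    (h : ChoiceAtom.chosen r w ∈ ⋃ n, Iseq n) : ChoiceAtom.diffchoice r w ∉ ⋃ n, Iseq n := by
  intro hd
  obtain ⟨n, hn⟩ := Set.mem_iUnion.1 hd
  obtain ⟨w', hc, hw'⟩ := diffchoice_step hcomp n hn
  exact satFD_limit hcomp r w w' h (Set.mem_iUnion.2 ⟨n, hw'⟩) hc

theorem limit_closed_TPD (hcomp : isLeastComputation P L Iseq)
    {ru : GroundRule (ChoiceAtom O V R ar)} (hru : ru ∈ P.PD' ∪ diffRules P)
    (hpos : (↑ru.pos : Set _) ⊆ ⋃ n, Iseq n) : ru.head ∈ ⋃ n, Iseq n := by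
  obtain ⟨n, hn⟩ := finset_subset_iUnion (step_mono hcomp) hpos
  -- `Iseq 0 = ∅` need not be closed, but every `Iseq (n + 1)` is.
  obtain ⟨J, -, hK⟩ := hcomp.2 n
  refine Set.mem_iUnion.2 ⟨n + 1, ?_⟩
  have hn' := hn.trans (step_mono hcomp (Nat.le_succ n))
  rw [hK] at hn' ⊢
  exact Tomega_closed _ J hru (neg_eq_empty hru) hn'

/-- An applicable chosen rule whose head were never derived would keep `Θ` nonempty forever,
contradicting finiteness of the set of atoms. -/
theorem limit_closed_chosen [Finite (ChoiceAtom O V R ar)] (hcomp : isLeastComputation P L Iseq)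
    {r : R} {p : (Fin (ar r) → V) × Finset (ChoiceAtom O V R ar)} (hp : p ∈ P.B r)
    (hneg : ChoiceAtom.diffchoice r p.1 ∉ ⋃ n, Iseq n)
    (hpos : (↑p.2 : Set _) ⊆ ⋃ n, Iseq n) : ChoiceAtom.chosen r p.1 ∈ ⋃ n, Iseq n := by
  by_contra hnot
  obtain ⟨n, hn⟩ := finset_subset_iUnion (step_mono hcomp) hpos
  have hTheta : ∀ m, n ≤ m → (ThetaI P (Iseq m)).Nonempty := by
    intro m hm
    refine ⟨ChoiceAtom.chosen r p.1, ⟨⟨⟨_, ⟨r, p, hp, rfl⟩, rfl,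
      hn.trans (step_mono hcomp hm), ?_⟩, fun h => hnot (Set.mem_iUnion.2 ⟨m, h⟩)⟩, ?_⟩⟩
    · intro b hb hbm
      rw [Finset.mem_singleton.1 hb] at hbm
      exact hneg (Set.mem_iUnion.2 ⟨m, hbm⟩)
    · refine satFD_insert (satFD_step hcomp m) fun w' hw' hc => hneg ?_
      refine limit_closed_TPD hcomp (Or.inr ⟨r, p.1, w', hc, rfl⟩) ?_
      simpa using ⟨m, hw'⟩
  obtain ⟨k, hk⟩ := WellFoundedGT.monotone_chain_condition (⟨Iseq, step_mono hcomp⟩ :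
    ℕ →o Set (ChoiceAtom O V R ar))
  refine step_strict hcomp (hTheta (max n k) (le_max_left _ _)) ?_
  exact (hk _ (le_max_right n k)).symm.trans (hk _ ((le_max_right n k).trans (Nat.le_succ _)))

theorem limit_subset (hcomp : isLeastComputation P L Iseq) {M' : Set (ChoiceAtom O V R ar)}
    (hM' : isModel (reduct (foe P) (⋃ n, Iseq n)) M') : ⋃ n, Iseq n ⊆ M' := by
  refine Set.iUnion_subset fun n => ?_
  induction n with
  | zero =>
    rw [hcomp.1]
    exact Set.empty_subset _
  | succ n ih =>
    obtain ⟨J, hJ, hK⟩ := hcomp.2 n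
    have hJM : J ⊆ ⋃ n, Iseq n :=
      (hK ▸ subset_Tomega (TPD P) J).trans (Set.subset_iUnion Iseq (n + 1))
    rw [hK]
    refine Tomega_subset ?_ ?_
    · rcases hJ with ⟨d, hd, rfl⟩ | ⟨-, rfl⟩
      · refine Set.union_subset ih (Set.singleton_subset_iff.2 ?_)
        have hdM := hJM (Or.inr rfl)
        obtain ⟨ru, ⟨r, p, hp, rfl⟩, rfl, hpos, -⟩ := hd.1.1.1
        refine head_mem_of_isModel_reduct hM' (Or.inl (Or.inr ⟨r, p, hp, rfl⟩)) ?_ (hpos.trans ih)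
        intro b hb
        rw [Finset.mem_singleton.1 hb]
        exact diffchoice_not_mem hcomp hdM
      · exact ih
    · rintro I hI a ⟨ru, hru, rfl, hpos, -⟩
      refine head_mem_of_isModel_reduct hM' ?_ (by simp [neg_eq_empty hru]) (hpos.trans hI)
      exact hru.elim (fun h => Or.inl (Or.inl h)) Or.inr

end Program

/-- for finite atom and value types, every inflationary least
choice fixpoint of `P` is a choice model of `P`, i.e. a stable model of `foe(P)`. -/
theorem least_fixpoint_is_choice_model {O V R : Type} {ar : R → ℕ} [LinearOrder V]
    [Finite R] [Finite V] [Finite (ChoiceAtom O V R ar)]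
    (P : ChoiceProgram O V R ar) (L : ChoiceLeast P)
    (Iseq : ℕ → Set (ChoiceAtom O V R ar))
    (hcomp : isLeastComputation P L Iseq) :
    isStableModel (foe P) (⋃ n, Iseq n) := by
  refine ⟨?_, fun M' hM' => limit_subset hcomp hM'⟩
  rintro _ ⟨ru, hru, hneg, rfl⟩ ⟨hpos, -⟩
  rcases hru with (hru | ⟨r, p, hp, rfl⟩) | hru
  · exact limit_closed_TPD hcomp (ru := ru) (Or.inl hru) hpos
  · exact limit_closed_chosen hcomp hp (hneg _ (Finset.mem_singleton_self _)) hpos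
  · exact limit_closed_TPD hcomp (ru := ru) (Or.inr hru) hpos
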